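/- The value (4+√2)/9 is the greatest element of the set of average guessing success probabilities p(RAC) achievable by qubit strategies for the (2,3) RAC: every qubit strategy satisfies p(RAC) ≤ (4+√2)/9, and some qubit strategy attains this value. -/

import Mathlib

/-!
Writing a Hermitian `2 × 2` matrix as `α I + a · σ` (Bloch form), positivity says `‖a‖ ≤ α`,
and a state has `α = 1/2`. A POVM therefore gives vectors `a₀, a₁, a₂` with `∑ aᵢ = 0` and
`∑ ‖aᵢ‖ ≤ 1`, so `‖aᵢ‖ ≤ 1/2`. Since the best state for the outcomes `i, j` contributes
`αᵢ + βⱼ + ‖aᵢ + bⱼ‖`, the upper bound amounts to `∑ᵢⱼ ‖aᵢ + bⱼ‖ ≤ 2 + 2√2` for two such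
triples.

The carrying estimate is `norm_add_le_bilinear`: for `‖x‖, ‖y‖ ≤ 1/2`,
`‖x + y‖ ≤ ‖x‖ + ‖y‖ - (4 - 2√2) ‖x‖ ‖y‖ + √2 ⟪x, y⟫`.
It is the tangent-line bound for the concave function `⟪x, y⟫ ↦ ‖x + y‖` at orthogonal vectors
of norm `1/2`, extended to the ball by convexity. Summed over `i, j`, the inner products cancel,
leaving `3P + 3Q - (4 - 2√2) P Q` with `P = ∑ ‖aᵢ‖ ≤ 1` and `Q = ∑ ‖bⱼ‖ ≤ 1`.

The value is attained by measuring `σ_z` and `σ_x`, the third outcome never occurring, with each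
state pointing along the sum of the two measurement vectors.
-/

open Matrix
open scoped ComplexOrder

/-- The states and POVMs form a valid qubit strategy for the `(2,3)` REC/RAC:
the states are positive semidefinite with unit trace, and each of the two decoding
triples is a POVM. -/
def IsQubitStrategy3 (ρ : Fin 3 → Fin 3 → Matrix (Fin 2) (Fin 2) ℂ)
    (M : Fin 2 → Fin 3 → Matrix (Fin 2) (Fin 2) ℂ) : Prop :=
  (∀ a₁ a₂, (ρ a₁ a₂).PosSemidef ∧ (ρ a₁ a₂).trace = 1) ∧
  (∀ i c, (M i c).PosSemidef) ∧
  (∀ i, ∑ c : Fin 3, M i c = 1)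

/-- Average guessing success probability for the `(2,3)` RAC with a qubit strategy. -/
noncomputable def pRAC3 (ρ : Fin 3 → Fin 3 → Matrix (Fin 2) (Fin 2) ℂ)
    (M : Fin 2 → Fin 3 → Matrix (Fin 2) (Fin 2) ℂ) : ℝ :=
  (1 / 18) * ∑ a₁ : Fin 3, ∑ a₂ : Fin 3, ∑ i : Fin 2,
    (((M i (if i = 0 then a₁ else a₂)) * ρ a₁ a₂).trace).re

section UpperBound

open scoped InnerProductSpace

variable {E : Type*} [NormedAddCommGroup E] [InnerProductSpace ℝ E]

/-- Split `x + y` into `2‖y‖ x + 2‖x‖ y`, whose two terms have equal norm, and nonnegative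
multiples of `x` and `y`. -/
lemma norm_add_le_bilinear (x y : E) (hx : ‖x‖ ≤ 1 / 2) (hy : ‖y‖ ≤ 1 / 2) :
    ‖x + y‖ ≤ ‖x‖ + ‖y‖ - (4 - 2 * √2) * (‖x‖ * ‖y‖) + √2 * ⟪x, y⟫_ℝ := by
  have hs : √2 ^ 2 = 2 := Real.sq_sqrt (by norm_num)
  have hs0 : 0 ≤ √2 := Real.sqrt_nonneg 2
  have hc := abs_le.1 (abs_real_inner_le_norm x y)
  have hpq : 0 ≤ ‖x‖ * ‖y‖ := by positivity
  have h1 : ‖(2 * ‖y‖) • x + (2 * ‖x‖) • y‖ ≤ √2 * (2 * (‖x‖ * ‖y‖) + ⟪x, y⟫_ℝ) := by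
    refine (pow_le_pow_iff_left₀ (norm_nonneg _)
      (mul_nonneg hs0 (by linarith)) two_ne_zero).1 ?_
    rw [norm_add_sq_real, norm_smul, norm_smul, real_inner_smul_left, real_inner_smul_right,
      Real.norm_of_nonneg (by positivity), Real.norm_of_nonneg (by positivity), mul_pow √2, hs]
    nlinarith [sq_nonneg ⟪x, y⟫_ℝ]
  have h2 : ‖(1 - 2 * ‖y‖) • x‖ = (1 - 2 * ‖y‖) * ‖x‖ := by
    rw [norm_smul, Real.norm_of_nonneg (by linarith)]
  have h3 : ‖(1 - 2 * ‖x‖) • y‖ = (1 - 2 * ‖x‖) * ‖y‖ := by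
    rw [norm_smul, Real.norm_of_nonneg (by linarith)]
  have h4 : x + y = ((2 * ‖y‖) • x + (2 * ‖x‖) • y) + (1 - 2 * ‖y‖) • x
      + (1 - 2 * ‖x‖) • y := by module
  have h5 := norm_add₃_le (a := (2 * ‖y‖) • x + (2 * ‖x‖) • y) (b := (1 - 2 * ‖y‖) • x)
    (c := (1 - 2 * ‖x‖) • y)
  rw [← h4, h2, h3] at h5
  linarith

/-- Any side of a closed triangle is at most half of its perimeter. -/
lemma norm_le_half {F : Type*} [NormedAddCommGroup F] (a : Fin 3 → F)
    (h0 : ∑ i, a i = 0) (h1 : ∑ i, ‖a i‖ ≤ 1) (i : Fin 3) :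
    ‖a i‖ ≤ 1 / 2 := by
  rw [Fin.sum_univ_three] at h0 h1
  have e0 : a 0 = -(a 1 + a 2) := by rw [eq_neg_iff_add_eq_zero, ← h0]; abel
  have e1 : a 1 = -(a 0 + a 2) := by rw [eq_neg_iff_add_eq_zero, ← h0]; abel
  have e2 : a 2 = -(a 0 + a 1) := by rw [eq_neg_iff_add_eq_zero, ← h0]; abel
  have n0 : ‖a 0‖ ≤ ‖a 1‖ + ‖a 2‖ := by rw [e0, norm_neg]; exact norm_add_le _ _
  have n1 : ‖a 1‖ ≤ ‖a 0‖ + ‖a 2‖ := by rw [e1, norm_neg]; exact norm_add_le _ _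
  have n2 : ‖a 2‖ ≤ ‖a 0‖ + ‖a 1‖ := by rw [e2, norm_neg]; exact norm_add_le _ _
  fin_cases i <;> simp only [Fin.zero_eta, Fin.mk_one, Fin.reduceFinMk] <;> linarith

lemma sum_norm_add_le (a b : Fin 3 → E) (ha : ∑ i, a i = 0) (hb : ∑ j, b j = 0)
    (ha1 : ∑ i, ‖a i‖ ≤ 1) (hb1 : ∑ j, ‖b j‖ ≤ 1) :
    ∑ i, ∑ j, ‖a i + b j‖ ≤ 2 + 2 * √2 := by
  have hs : √2 ≤ 2 := by rw [Real.sqrt_le_left (by norm_num)]; norm_num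
  have hs1 : 1 ≤ √2 := by rw [Real.one_le_sqrt]; norm_num
  have hin : ∑ i, ∑ j, ⟪a i, b j⟫_ℝ = 0 := by
    simp [← inner_sum, hb]
  have hmul : (∑ i, ‖a i‖) * ∑ j, ‖b j‖ = ∑ i, ∑ j, ‖a i‖ * ‖b j‖ := Finset.sum_mul_sum ..
  have hP : 0 ≤ ∑ i, ‖a i‖ := Finset.sum_nonneg fun i _ => norm_nonneg _
  have hQ : 0 ≤ ∑ j, ‖b j‖ := Finset.sum_nonneg fun i _ => norm_nonneg _
  calc ∑ i, ∑ j, ‖a i + b j‖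
      ≤ ∑ i, ∑ j, (‖a i‖ + ‖b j‖ - (4 - 2 * √2) * (‖a i‖ * ‖b j‖) + √2 * ⟪a i, b j⟫_ℝ) :=
        Finset.sum_le_sum fun i _ => Finset.sum_le_sum fun j _ =>
          norm_add_le_bilinear _ _ (norm_le_half a ha ha1 i) (norm_le_half b hb hb1 j)
    _ = 3 * (∑ i, ‖a i‖) + 3 * (∑ j, ‖b j‖)
        - (4 - 2 * √2) * ((∑ i, ‖a i‖) * ∑ j, ‖b j‖) := by
        rw [hmul]
        simp only [Finset.sum_add_distrib, Finset.sum_sub_distrib, ← Finset.mul_sum, hin]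
        simp [Finset.mul_sum]
    _ ≤ 2 + 2 * √2 := by
        generalize ∑ i, ‖a i‖ = P at *
        generalize ∑ j, ‖b j‖ = Q at *
        nlinarith [mul_nonneg (sub_nonneg.2 hs) (mul_nonneg (sub_nonneg.2 ha1) hQ),
          mul_nonneg (sub_nonneg.2 ha1) (sub_nonneg.2 hb1),
          mul_nonneg (sub_nonneg.2 hs1) (sub_nonneg.2 ha1),
          mul_nonneg (sub_nonneg.2 hs1) (sub_nonneg.2 hb1),
          mul_nonneg (sub_nonneg.2 hs) (sub_nonneg.2 hb1),
          mul_nonneg (mul_nonneg (sub_nonneg.2 hs) (sub_nonneg.2 ha1)) (sub_nonneg.2 hb1)]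

end UpperBound

/-- The vector `a` with `M = α I + a · σ` for Hermitian `M`, up to the sign of the `σ_y`
coordinate. -/
noncomputable def bloch (M : Matrix (Fin 2) (Fin 2) ℂ) : EuclideanSpace ℝ (Fin 3) :=
  !₂[(M 0 1).re, (M 0 1).im, ((M 0 0).re - (M 1 1).re) / 2]

/-- The coefficient `α` in `M = α I + a · σ`. -/
noncomputable def halfTrace (M : Matrix (Fin 2) (Fin 2) ℂ) : ℝ :=
  ((M 0 0).re + (M 1 1).re) / 2

/-- With `M = α I + a · σ` this is `det M = α² - ‖a‖² ≥ 0`. -/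
lemma norm_bloch_le {M : Matrix (Fin 2) (Fin 2) ℂ} (h : M.PosSemidef) :
    ‖bloch M‖ ≤ halfTrace M := by
  have hd := h.det_nonneg
  have h0 := h.diag_nonneg (i := 0)
  have h1 := h.diag_nonneg (i := 1)
  have h10 := h.isHermitian.apply 1 0
  rw [det_fin_two, ← h10] at hd
  rw [Complex.le_def] at hd h0 h1
  obtain ⟨hd, -⟩ := hd
  obtain ⟨h0, i0⟩ := h0
  obtain ⟨h1, i1⟩ := h1
  simp at hd h0 h1 i0 i1
  rw [← i0, ← i1] at hd
  refine (pow_le_pow_iff_left₀ (norm_nonneg _)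
    (by unfold halfTrace; linarith) two_ne_zero).1 ?_
  rw [EuclideanSpace.norm_sq_eq, Fin.sum_univ_three]
  simp [bloch, halfTrace, div_pow, sq_abs]
  nlinarith

/-- `Tr[(A + B) ρ] ≤ α + β + ‖a + b‖`, because the Bloch vector of `ρ` has norm at most `1/2`. -/
lemma trace_pair_le {A B R : Matrix (Fin 2) (Fin 2) ℂ} (hA : A.PosSemidef) (hB : B.PosSemidef)
    (hR : R.PosSemidef) (ht : R.trace = 1) :
    ((A * R).trace).re + ((B * R).trace).re ≤
      halfTrace A + halfTrace B + ‖bloch A + bloch B‖ := by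
  have key : ∀ {M : Matrix (Fin 2) (Fin 2) ℂ}, M.PosSemidef →
      ((M * R).trace).re = halfTrace M + 2 * inner ℝ (bloch M) (bloch R) := by
    intro M hM
    have a0 := (Complex.le_def.1 (hM.diag_nonneg (i := 0))).2
    have a1 := (Complex.le_def.1 (hM.diag_nonneg (i := 1))).2
    have h1 := congrArg Complex.re ht
    have hm := hM.isHermitian.apply 1 0
    have hr := hR.isHermitian.apply 1 0
    simp [trace_fin_two] at a0 a1 h1
    simp [trace_fin_two, mul_apply, Fin.sum_univ_two, PiLp.inner_apply, Fin.sum_univ_three,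
      bloch, halfTrace, ← hm, ← hr, ← a0, ← a1]
    have h2 : (R 0 0).re = 1 - (R 1 1).re := by linarith
    rw [h2]
    ring
  have hhalf : halfTrace R = 1 / 2 := by
    have h1 := congrArg Complex.re ht
    simp [trace_fin_two] at h1
    simp [halfTrace, h1]
  have hn : ‖bloch R‖ ≤ 1 / 2 := hhalf ▸ norm_bloch_le hR
  rw [key hA, key hB]
  have h3 := real_inner_le_norm (bloch A + bloch B) (bloch R)
  rw [inner_add_left] at h3
  nlinarith [norm_nonneg (bloch A + bloch B)]

lemma sum_bloch {N : Fin 3 → Matrix (Fin 2) (Fin 2) ℂ} (h : ∑ c, N c = 1) :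
    ∑ c, bloch (N c) = 0 := by
  have h00 := congrArg Complex.re (congrFun (congrFun h 0) 0)
  have h11 := congrArg Complex.re (congrFun (congrFun h 1) 1)
  have h01 := congrArg Complex.re (congrFun (congrFun h 0) 1)
  have h01' := congrArg Complex.im (congrFun (congrFun h 0) 1)
  simp [Fin.sum_univ_three] at h00 h11 h01 h01'
  ext i
  fin_cases i <;> simp [bloch, Fin.sum_univ_three] <;> linarith

lemma sum_halfTrace {N : Fin 3 → Matrix (Fin 2) (Fin 2) ℂ} (h : ∑ c, N c = 1) :
    ∑ c, halfTrace (N c) = 1 := by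
  have h00 := congrArg Complex.re (congrFun (congrFun h 0) 0)
  have h11 := congrArg Complex.re (congrFun (congrFun h 1) 1)
  simp [Fin.sum_univ_three] at h00 h11
  simp [halfTrace, Fin.sum_univ_three]
  linarith

lemma pRAC3_le {ρ : Fin 3 → Fin 3 → Matrix (Fin 2) (Fin 2) ℂ}
    {M : Fin 2 → Fin 3 → Matrix (Fin 2) (Fin 2) ℂ} (h : IsQubitStrategy3 ρ M) :
    pRAC3 ρ M ≤ (4 + √2) / 9 := by
  obtain ⟨hρ, hM, hS⟩ := h
  have hnorm : ∀ i, ∑ c, ‖bloch (M i c)‖ ≤ 1 := fun i =>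
    (Finset.sum_le_sum fun c _ => norm_bloch_le (hM i c)).trans_eq (sum_halfTrace (hS i))
  have hmain := sum_norm_add_le (fun c => bloch (M 0 c)) (fun c => bloch (M 1 c))
    (sum_bloch (hS 0)) (sum_bloch (hS 1)) (hnorm 0) (hnorm 1)
  have hle : ∑ a₁ : Fin 3, ∑ a₂ : Fin 3, ∑ i : Fin 2,
      (((M i (if i = 0 then a₁ else a₂)) * ρ a₁ a₂).trace).re ≤
      ∑ a₁ : Fin 3, ∑ a₂ : Fin 3, (halfTrace (M 0 a₁) + halfTrace (M 1 a₂) +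
        ‖bloch (M 0 a₁) + bloch (M 1 a₂)‖) := by
    refine Finset.sum_le_sum fun a₁ _ => Finset.sum_le_sum fun a₂ _ => ?_
    simpa [Fin.sum_univ_two] using
      trace_pair_le (hM 0 a₁) (hM 1 a₂) (hρ a₁ a₂).1 (hρ a₁ a₂).2
  have hsplit : ∑ a₁ : Fin 3, ∑ a₂ : Fin 3, (halfTrace (M 0 a₁) + halfTrace (M 1 a₂) +
        ‖bloch (M 0 a₁) + bloch (M 1 a₂)‖) =
      6 + ∑ a₁ : Fin 3, ∑ a₂ : Fin 3, ‖bloch (M 0 a₁) + bloch (M 1 a₂)‖ := by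
    simp only [Finset.sum_add_distrib, sum_halfTrace (hS 1), Finset.sum_const, ← Finset.smul_sum,
      sum_halfTrace (hS 0)]
    norm_num
  unfold pRAC3
  linarith

/-- The matrix `(I + x σ_x + z σ_z) / 2`, a state when `x² + z² ≤ 1`. -/
noncomputable def xzState (x z : ℝ) : Matrix (Fin 2) (Fin 2) ℂ :=
  !![(1 + z) / 2, x / 2; x / 2, (1 - z) / 2]

/-- By Cayley–Hamilton a `2 × 2` matrix `S` of trace one is `S² + det S • 1`; here `S` is
Hermitian and `det S = (1 - x² - z²) / 4`. -/
lemma xzState_posSemidef {x z : ℝ} (h : x ^ 2 + z ^ 2 ≤ 1) : (xzState x z).PosSemidef := by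
  have hd : 0 ≤ (1 - x ^ 2 - z ^ 2) / 4 := by linarith
  have e : xzState x z = xzState x z * (xzState x z)ᴴ
      + (((1 - x ^ 2 - z ^ 2) / 4 : ℝ) : ℂ) • (1 : Matrix (Fin 2) (Fin 2) ℂ) := by
    have hh : (xzState x z)ᴴ = xzState x z := by
      ext i j
      fin_cases i <;> fin_cases j <;> simp [xzState, conjTranspose_apply]
    rw [hh]
    ext i j
    fin_cases i <;> fin_cases j <;> simp [xzState] <;> ring
  rw [e]
  exact (posSemidef_self_mul_conjTranspose _).add
    (PosSemidef.one.smul (Complex.zero_le_real.2 hd))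

lemma xzState_trace (x z : ℝ) : (xzState x z).trace = 1 := by
  simp [xzState, trace_fin_two]; ring

/-- The `σ_z`-components of the optimal states; the `σ_x`-components form the transpose. -/
noncomputable def optZ : Matrix (Fin 3) (Fin 3) ℝ :=
  !![√2 / 2, √2 / 2, 1; -(√2 / 2), -(√2 / 2), -1; 0, 0, 0]

lemma attained : ∃ (ρ : Fin 3 → Fin 3 → Matrix (Fin 2) (Fin 2) ℂ)
    (M : Fin 2 → Fin 3 → Matrix (Fin 2) (Fin 2) ℂ),
    IsQubitStrategy3 ρ M ∧ (4 + √2) / 9 = pRAC3 ρ M := by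
  have hs : √2 ^ 2 = 2 := Real.sq_sqrt (by norm_num)
  refine ⟨fun i j => xzState (optZ j i) (optZ i j),
    ![![xzState 0 1, xzState 0 (-1), 0], ![xzState 1 0, xzState (-1) 0, 0]], ⟨?_, ?_, ?_⟩, ?_⟩
  · refine fun i j => ⟨xzState_posSemidef ?_, xzState_trace _ _⟩
    fin_cases i <;> fin_cases j <;> simp [optZ] <;> nlinarith
  · intro i c
    fin_cases i <;> fin_cases c <;> simp only [Fin.zero_eta, Fin.mk_one, Fin.reduceFinMk] <;>
      first
      | exact xzState_posSemidef (by norm_num)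
      | exact PosSemidef.zero
  · intro i
    ext k l
    fin_cases i <;> fin_cases k <;> fin_cases l <;>
      simp [Fin.sum_univ_three, xzState] <;> norm_num
  · have ht : ∀ x z x' z' : ℝ, ((xzState x z * xzState x' z').trace).re
        = (1 + x * x' + z * z') / 2 := by
      intro x z x' z'
      simp [xzState, trace_fin_two]
      ring
    simp only [pRAC3, Fin.sum_univ_three, Fin.sum_univ_two]
    simp [ht, optZ]
    ring

/-- The maximum average guessing success probability of the `(2,3)` RAC over all qubit
strategies is `(4+√2)/9`. -/
theorem stmt10 :
    IsGreatest
      {x : ℝ | ∃ (ρ : Fin 3 → Fin 3 → Matrix (Fin 2) (Fin 2) ℂ)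
        (M : Fin 2 → Fin 3 → Matrix (Fin 2) (Fin 2) ℂ),
        IsQubitStrategy3 ρ M ∧ x = pRAC3 ρ M}
      ((4 + Real.sqrt 2) / 9) := by
  refine ⟨attained, ?_⟩
  rintro x ⟨ρ, M, h, rfl⟩
  exact pRAC3_le h
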